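/- Uniqueness of regression equilibrium: in the market model with C and S symmetric positive definite and every γⱼ > 0, any two solutions (Θ, G, L) and (Θ', G', L') of the variational inequality VI(K, ∇f) satisfy, for every sample i: Θφᵢ = Θ'φᵢ, pᵢ + rᵢ⁺ − rᵢ⁻ = pᵢ' + rᵢ'⁺ − rᵢ'⁻, and ℓᵢ = ℓᵢ'. If moreover the feature Gram matrix Σᵢ φᵢ φᵢᵀ is positive definite, then Θ = Θ'. -/

import Mathlib

open Matrix

/-- Decision variables of the market model: a regression profile `Θ` and, for
each sample `i`, vectors `pᵢ`, `rᵢ⁺`, `rᵢ⁻`, `ℓᵢ`. -/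
abbrev MarketPoint (nb n m : ℕ) :=
  (Fin nb → Fin m → ℝ) × (Fin n → Fin nb → ℝ) × (Fin n → Fin nb → ℝ) ×
    (Fin n → Fin nb → ℝ) × (Fin n → Fin nb → ℝ)

/-- The market objective `f`. -/
noncomputable def marketObj (nb n m : ℕ) (C S : Matrix (Fin nb) (Fin nb) ℝ)
    (γ : Fin nb → ℝ) (c cplus cminus s : Fin nb → ℝ)
    (φ : Fin n → Fin m → ℝ) (w : Fin n → Fin nb → ℝ) :
    MarketPoint nb n m → ℝ :=
  fun x =>
    match x with
    | (Θ, p, rp, rm, ℓ) =>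
      (1 / (n : ℝ)) * ∑ i, (
        ((Matrix.of Θ).mulVec (φ i) - w i) ⬝ᵥ
          (Matrix.diagonal γ).mulVec ((Matrix.of Θ).mulVec (φ i) - w i) +
        (p i + rp i - rm i) ⬝ᵥ C.mulVec (p i + rp i - rm i) +
        c ⬝ᵥ p i + cplus ⬝ᵥ rp i - cminus ⬝ᵥ rm i +
        ℓ i ⬝ᵥ S.mulVec (ℓ i) + s ⬝ᵥ ℓ i)

/-- The feasible set `K` of the market model. -/
def marketFeas (nb n m nl : ℕ) (d plow pup : Fin nb → ℝ)
    (Fptdf : Matrix (Fin nl) (Fin nb) ℝ) (fbar : Fin nl → ℝ)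
    (φ : Fin n → Fin m → ℝ) (w : Fin n → Fin nb → ℝ) (τ : Fin nb → ℝ) :
    Set (MarketPoint nb n m) :=
  { x | match x with
    | (Θ, p, rp, rm, ℓ) =>
      (∀ i, ∑ j, (p i j + (Matrix.of Θ).mulVec (φ i) j - d j) = 0) ∧
      (∀ i, ∑ j, (rp i j - rm i j - (Matrix.of Θ).mulVec (φ i) j + w i j + ℓ i j) = 0) ∧
      (∀ i, ∀ l, |Fptdf.mulVec (p i + (Matrix.of Θ).mulVec (φ i) - d) l| ≤ fbar l) ∧
      (∀ i, ∀ l, |Fptdf.mulVec (p i + (Matrix.of Θ).mulVec (φ i) - d) l +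
        Fptdf.mulVec (rp i - rm i - (Matrix.of Θ).mulVec (φ i) + w i + ℓ i) l| ≤ fbar l) ∧
      (∀ i, plow ≤ p i + rp i - rm i ∧ p i + rp i - rm i ≤ pup) ∧
      (∀ i, 0 ≤ rp i ∧ rp i ≤ pup - p i) ∧
      (∀ i, 0 ≤ rm i ∧ rm i ≤ p i - plow) ∧
      (∀ i, 0 ≤ ℓ i ∧ ℓ i ≤ d) ∧
      (∀ j, ∑ jm, |Θ j jm| ≤ τ j) }

/-!
The objective is a quadratic form plus an affine function of the decision variables, so testing the
variational inequality at each of the two solutions against the other one and adding up leaves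
`Q (x - y) ≤ 0`, where `Q` is the quadratic part. Definiteness of `Γ`, `C` and `S` then annihilates
the predictions, the total dispatch and the load shedding of `x - y`; and a profile `Θ - Θ'` that
annihilates every `φᵢ` annihilates the Gram matrix `∑ᵢ φᵢ φᵢᵀ`, hence vanishes once the latter is
invertible.
-/

section VariationalInequality

variable {E : Type*} [AddCommGroup E] [Module ℝ E] [TopologicalSpace E]

/-- `x` solves the variational inequality VI(`K`, `F`). The map `F` takes values in the dual of `E`
instead of `E`, so that `F = ∇f` is `fderiv ℝ f` and no inner product is needed. -/
def SolvesVI (K : Set E) (F : E → E →L[ℝ] ℝ) (x : E) : Prop :=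
  x ∈ K ∧ ∀ y ∈ K, 0 ≤ F x (y - x)

theorem SolvesVI.sub_apply_sub_nonpos {K : Set E} {F : E → E →L[ℝ] ℝ} {x y : E}
    (hx : SolvesVI K F x) (hy : SolvesVI K F y) : (F x - F y) (x - y) ≤ 0 := by
  have hxy : 0 ≤ F x (y - x) := hx.2 y hy.1
  have hyx : 0 ≤ F y (x - y) := hy.2 x hx.1
  rw [← neg_sub, map_neg] at hxy
  rw [_root_.sub_apply]
  linarith

end VariationalInequality

section QuadraticPart

theorem quadraticMap_sub_apply {R M N : Type*} [CommRing R] [AddCommGroup M] [Module R M]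
    [AddCommGroup N] [Module R N] (Q : QuadraticMap R M N) (x y : M) :
    Q (x - y) = Q x - QuadraticMap.polar Q x y + Q y := by
  rw [sub_eq_add_neg, QuadraticMap.map_add Q, Q.map_neg, Q.polar_neg_right]
  abel

theorem hasFDerivAt_quadraticMap {𝕜 E F : Type*} [NontriviallyNormedField 𝕜] [CompleteSpace 𝕜]
    [NormedAddCommGroup E] [NormedSpace 𝕜 E] [FiniteDimensional 𝕜 E]
    [NormedAddCommGroup F] [NormedSpace 𝕜 F] (Q : QuadraticMap 𝕜 E F) (x : E) :
    HasFDerivAt Q (Q.polarBilin x).toContinuousLinearMap x := by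
  obtain ⟨B, rfl⟩ := LinearMap.BilinMap.toQuadraticMap_surjective Q
  refine (B.toContinuousBilinearMap.hasFDerivAt_of_bilinear (hasFDerivAt_id x)
    (hasFDerivAt_id x)).congr_fderiv ?_
  ext v
  simp [LinearMap.BilinMap.polar_toQuadraticMap]

variable {E : Type*} [NormedAddCommGroup E] [NormedSpace ℝ E] [FiniteDimensional ℝ E]

theorem fderiv_quadraticForm_add_affineMap (Q : QuadraticForm ℝ E) (g : E →ᵃ[ℝ] ℝ) (x v : E) :
    fderiv ℝ (fun z => Q z + g z) x v = QuadraticMap.polar Q x v + g.linear v := by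
  have hg : HasFDerivAt g g.linear.toContinuousLinearMap x := by
    rw [g.decomp]
    exact g.linear.toContinuousLinearMap.hasFDerivAt.add_const _
  have hQg := (hasFDerivAt_quadraticMap Q x).add hg
  exact DFunLike.congr_fun hQg.fderiv v

theorem SolvesVI.quadraticForm_sub_nonpos {K : Set E} {Q : QuadraticForm ℝ E} {g : E →ᵃ[ℝ] ℝ}
    {x y : E} (hx : SolvesVI K (fderiv ℝ fun z => Q z + g z) x)
    (hy : SolvesVI K (fderiv ℝ fun z => Q z + g z) y) : Q (x - y) ≤ 0 := by
  have h := hx.sub_apply_sub_nonpos hy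
  rw [_root_.sub_apply, fderiv_quadraticForm_add_affineMap,
    fderiv_quadraticForm_add_affineMap, add_sub_add_right_eq_sub, ← QuadraticMap.polar_sub_left,
    QuadraticMap.polar_self, two_nsmul] at h
  linarith

end QuadraticPart

section Matrix

theorem matrix_toQuadraticForm'_apply {n R : Type*} [Fintype n] [DecidableEq n] [CommRing R]
    (M : Matrix n n R) (x : n → R) : M.toQuadraticForm' x = x ⬝ᵥ M *ᵥ x :=
  toLinearMap₂'_apply' M x x

theorem eq_of_mulVec_eq_of_isUnit_sum_vecMulVec {ι l n R : Type*} [Fintype ι] [Fintype n]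
    [DecidableEq n] [CommRing R] {φ ψ : ι → n → R} (hG : IsUnit (∑ i, vecMulVec (φ i) (ψ i)))
    {A B : Matrix l n R} (h : ∀ i, A *ᵥ φ i = B *ᵥ φ i) : A = B := by
  have := hG.invertible
  apply mul_left_injective_of_invertible (∑ i, vecMulVec (φ i) (ψ i))
  simp only [Matrix.mul_sum, mul_vecMulVec, h]

end Matrix

namespace MarketPoint

variable {nb n m : ℕ}

/-- The generation `pᵢ`. -/
def generation (i : Fin n) : MarketPoint nb n m →ₗ[ℝ] Fin nb → ℝ where
  toFun x := x.2.1 i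
  map_add' _ _ := rfl
  map_smul' _ _ := rfl

/-- The upward reserve `rᵢ⁺`. -/
def upReserve (i : Fin n) : MarketPoint nb n m →ₗ[ℝ] Fin nb → ℝ where
  toFun x := x.2.2.1 i
  map_add' _ _ := rfl
  map_smul' _ _ := rfl

/-- The downward reserve `rᵢ⁻`. -/
def downReserve (i : Fin n) : MarketPoint nb n m →ₗ[ℝ] Fin nb → ℝ where
  toFun x := x.2.2.2.1 i
  map_add' _ _ := rfl
  map_smul' _ _ := rfl

/-- The load shedding `ℓᵢ`. -/
def shedding (i : Fin n) : MarketPoint nb n m →ₗ[ℝ] Fin nb → ℝ where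
  toFun x := x.2.2.2.2 i
  map_add' _ _ := rfl
  map_smul' _ _ := rfl

/-- The wind prediction `Θφᵢ`. -/
def prediction (φ : Fin n → Fin m → ℝ) (i : Fin n) : MarketPoint nb n m →ₗ[ℝ] Fin nb → ℝ where
  toFun x := Matrix.of x.1 *ᵥ φ i
  map_add' x y := add_mulVec (Matrix.of x.1) (Matrix.of y.1) (φ i)
  map_smul' a x := smul_mulVec a (Matrix.of x.1) (φ i)

/-- The total dispatch `pᵢ + rᵢ⁺ - rᵢ⁻`. -/
def dispatch (i : Fin n) : MarketPoint nb n m →ₗ[ℝ] Fin nb → ℝ :=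
  generation i + upReserve i - downReserve i

end MarketPoint

open MarketPoint

section Market

variable {nb n m : ℕ} (C S : Matrix (Fin nb) (Fin nb) ℝ) (γ : Fin nb → ℝ)
  (φ : Fin n → Fin m → ℝ)

/-- The quadratic part
`(1/n) ∑ᵢ [(Θφᵢ)ᵀΓ(Θφᵢ) + (pᵢ+rᵢ⁺-rᵢ⁻)ᵀC(pᵢ+rᵢ⁺-rᵢ⁻) + ℓᵢᵀSℓᵢ]` of the market objective. -/
noncomputable def marketQuadraticForm : QuadraticForm ℝ (MarketPoint nb n m) :=
  (1 / (n : ℝ)) • ∑ i, ((diagonal γ).toQuadraticForm'.comp (prediction φ i) +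
    C.toQuadraticForm'.comp (dispatch i) + S.toQuadraticForm'.comp (shedding i))

theorem marketQuadraticForm_apply (x : MarketPoint nb n m) :
    marketQuadraticForm C S γ φ x = (1 / (n : ℝ)) * ∑ i,
      ((diagonal γ).toQuadraticForm' (prediction φ i x) + C.toQuadraticForm' (dispatch i x) +
        S.toQuadraticForm' (shedding i x)) := by
  simp [marketQuadraticForm]

theorem marketObj_apply (c cplus cminus s : Fin nb → ℝ) (w : Fin n → Fin nb → ℝ)
    (x : MarketPoint nb n m) :
    marketObj nb n m C S γ c cplus cminus s φ w x = (1 / (n : ℝ)) * ∑ i,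
      ((diagonal γ).toQuadraticForm' (prediction φ i x - w i) +
        C.toQuadraticForm' (dispatch i x) +
        c ⬝ᵥ generation i x + cplus ⬝ᵥ upReserve i x - cminus ⬝ᵥ downReserve i x +
        S.toQuadraticForm' (shedding i x) + s ⬝ᵥ shedding i x) := by
  simp only [matrix_toQuadraticForm'_apply]
  rfl

theorem exists_marketObj_eq_quadraticForm_add_affineMap (c cplus cminus s : Fin nb → ℝ)
    (w : Fin n → Fin nb → ℝ) :
    ∃ g : MarketPoint nb n m →ᵃ[ℝ] ℝ, marketObj nb n m C S γ c cplus cminus s φ w =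
      fun x => marketQuadraticForm C S γ φ x + g x := by
  let q := (diagonal γ).toQuadraticForm'
  let dot : (Fin nb → ℝ) →ₗ[ℝ] (Fin nb → ℝ) →ₗ[ℝ] ℝ := dotProductBilin ℝ ℝ
  -- The cross terms of the squared prediction errors `q (Θφᵢ - wᵢ)` belong to the linear part.
  let linearCost (i : Fin n) : MarketPoint nb n m →ₗ[ℝ] ℝ :=
    dot c ∘ₗ generation i + dot cplus ∘ₗ upReserve i - dot cminus ∘ₗ downReserve i +
      dot s ∘ₗ shedding i - q.polarBilin.flip (w i) ∘ₗ prediction φ i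
  let g : MarketPoint nb n m →ᵃ[ℝ] ℝ := ((1 / (n : ℝ)) • ∑ i, linearCost i).toAffineMap +
    AffineMap.const ℝ _ ((1 / (n : ℝ)) * ∑ i, q (w i))
  have g_apply (x : MarketPoint nb n m) :
      g x = (1 / (n : ℝ)) * ∑ i, (linearCost i x + q (w i)) := by
    simp [g, Finset.sum_add_distrib, mul_add]
  refine ⟨g, funext fun x => ?_⟩
  rw [marketObj_apply, marketQuadraticForm_apply, g_apply, ← mul_add, ← Finset.sum_add_distrib]
  congr! 2 with i
  simp only [linearCost, dot, q, quadraticMap_sub_apply, LinearMap.sub_apply, LinearMap.add_apply,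
    LinearMap.coe_comp, Function.comp_apply, dotProductBilin_apply_apply, LinearMap.flip_apply,
    QuadraticMap.polarBilin_apply_apply]
  ring

variable {C S γ φ}

theorem eq_zero_of_marketQuadraticForm_nonpos (hC : C.toQuadraticForm'.PosDef)
    (hS : S.toQuadraticForm'.PosDef) (hγ : ∀ j, 0 < γ j)
    {v : MarketPoint nb n m} (hv : marketQuadraticForm C S γ φ v ≤ 0) (i : Fin n) :
    prediction φ i v = 0 ∧ dispatch i v = 0 ∧ shedding i v = 0 := by
  have hΓ : (diagonal γ).toQuadraticForm'.PosDef := (PosDef.diagonal hγ).toQuadraticForm'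
  have hn : 0 < 1 / (n : ℝ) := one_div_pos.2 (Nat.cast_pos.2 i.pos)
  rw [marketQuadraticForm_apply] at hv
  have sample_nonneg (k : Fin n) : 0 ≤ (diagonal γ).toQuadraticForm' (prediction φ k v) +
      C.toQuadraticForm' (dispatch k v) + S.toQuadraticForm' (shedding k v) :=
    add_nonneg (add_nonneg (hΓ.nonneg _) (hC.nonneg _)) (hS.nonneg _)
  have sample_nonpos : (diagonal γ).toQuadraticForm' (prediction φ i v) +
      C.toQuadraticForm' (dispatch i v) + S.toQuadraticForm' (shedding i v) ≤ 0 :=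
    (Finset.single_le_sum (fun k _ => sample_nonneg k) (Finset.mem_univ i)).trans
      (nonpos_of_mul_nonpos_right hv hn)
  refine ⟨hΓ.le_zero_iff.1 ?_, hC.le_zero_iff.1 ?_, hS.le_zero_iff.1 ?_⟩ <;>
    linarith [hΓ.nonneg (prediction φ i v), hC.nonneg (dispatch i v), hS.nonneg (shedding i v)]

theorem regression_equilibrium_unique_general {K : Set (MarketPoint nb n m)}
    (hC : C.toQuadraticForm'.PosDef) (hS : S.toQuadraticForm'.PosDef) (hγ : ∀ j, 0 < γ j)
    {c cplus cminus s : Fin nb → ℝ} {w : Fin n → Fin nb → ℝ}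
    {x y : MarketPoint nb n m}
    (hx : SolvesVI K (fderiv ℝ (marketObj nb n m C S γ c cplus cminus s φ w)) x)
    (hy : SolvesVI K (fderiv ℝ (marketObj nb n m C S γ c cplus cminus s φ w)) y) :
    ((∀ i, prediction φ i x = prediction φ i y) ∧ (∀ i, dispatch i x = dispatch i y) ∧
      (∀ i, shedding i x = shedding i y)) ∧
    ((∑ i, vecMulVec (φ i) (φ i)).PosDef → x.1 = y.1) := by
  obtain ⟨g, hg⟩ := exists_marketObj_eq_quadraticForm_add_affineMap C S γ φ c cplus cminus s w
  rw [hg] at hx hy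
  have h := eq_zero_of_marketQuadraticForm_nonpos hC hS hγ (hx.quadraticForm_sub_nonpos hy)
  simp only [map_sub, sub_eq_zero] at h
  have hpred (i : Fin n) : prediction φ i x = prediction φ i y := (h i).1
  exact ⟨⟨hpred, fun i => (h i).2.1, fun i => (h i).2.2⟩, fun hG =>
    Matrix.of.injective (eq_of_mulVec_eq_of_isUnit_sum_vecMulVec hG.isUnit hpred)⟩

end Market

/-- Uniqueness of regression equilibrium: with `C`, `S` symmetric positive
definite and all `γⱼ > 0`, any two solutions of the variational inequality
VI(K, ∇f) have the same predictions `Θφᵢ`, the same total dispatch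
`pᵢ + rᵢ⁺ − rᵢ⁻`, and the same load shedding `ℓᵢ` for every sample `i`;
if moreover the feature Gram matrix `Σᵢ φᵢφᵢᵀ` is positive definite,
the regression profiles coincide. -/
theorem regression_equilibrium_unique (nb n m nl : ℕ)
    (C S : Matrix (Fin nb) (Fin nb) ℝ) (hC : C.PosDef) (hS : S.PosDef)
    (γ : Fin nb → ℝ) (hγ : ∀ j, 0 < γ j)
    (c cplus cminus s d plow pup : Fin nb → ℝ) (hp : plow ≤ pup)
    (Fptdf : Matrix (Fin nl) (Fin nb) ℝ) (fbar : Fin nl → ℝ)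
    (φ : Fin n → Fin m → ℝ) (w : Fin n → Fin nb → ℝ)
    (τ : Fin nb → ℝ) (hτ : ∀ j, 0 < τ j)
    (Θ Θ' : Fin nb → Fin m → ℝ) (p rp rm ℓ p' rp' rm' ℓ' : Fin n → Fin nb → ℝ)
    (hmem : (Θ, p, rp, rm, ℓ) ∈ marketFeas nb n m nl d plow pup Fptdf fbar φ w τ)
    (hsol : ∀ x ∈ marketFeas nb n m nl d plow pup Fptdf fbar φ w τ,
      0 ≤ fderiv ℝ (marketObj nb n m C S γ c cplus cminus s φ w)
            (Θ, p, rp, rm, ℓ) (x - (Θ, p, rp, rm, ℓ)))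
    (hmem' : (Θ', p', rp', rm', ℓ') ∈ marketFeas nb n m nl d plow pup Fptdf fbar φ w τ)
    (hsol' : ∀ x ∈ marketFeas nb n m nl d plow pup Fptdf fbar φ w τ,
      0 ≤ fderiv ℝ (marketObj nb n m C S γ c cplus cminus s φ w)
            (Θ', p', rp', rm', ℓ') (x - (Θ', p', rp', rm', ℓ'))) :
    ((∀ i, (Matrix.of Θ).mulVec (φ i) = (Matrix.of Θ').mulVec (φ i)) ∧
     (∀ i, p i + rp i - rm i = p' i + rp' i - rm' i) ∧
     (∀ i, ℓ i = ℓ' i)) ∧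
    ((∑ i, Matrix.vecMulVec (φ i) (φ i)).PosDef → Θ = Θ') :=
  regression_equilibrium_unique_general hC.toQuadraticForm' hS.toQuadraticForm' hγ
    ⟨hmem, hsol⟩ ⟨hmem', hsol'⟩
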